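/- arXiv:2305.04116 — 3 statements merged into one kernel-verified Lean document; each statement's English description precedes it below -/
import Mathlib

section
/- For the expected conditional covariance, if the truth lies in G(r_n, s_n) then the plugin estimator ψ̂_pi = (1/n) Σ_{i=1}^n A_i Y_i − (1/n) Σ_{i=1}^n π̂(X_i) μ̂(X_i) satisfies E(ψ̂_pi − ψ^cov)² ≲ r_n · s_n + r_n + s_n + 1/n, up to a universal positive constant. -/
open MeasureTheory
open scoped ENNReal NNReal

noncomputable section

/-- One-observation sample space `(X, A, Y)` for the expected conditional covariance problem,
with binary treatment `A` and binary outcome `Y`. -/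
abbrev CovSample (d : ℕ) := (Fin d → ℝ) × Bool × Bool

/-- Likelihood of one observation `(x, a, y)` in the binary model parametrized by the
quadruple `(μ, π, η, p_X)`:
`p(x,a,y) = p_X(x) π(x)^a (1-π(x))^{1-a} (μ(x)+(1-π(x))η(x))^{ay} (μ(x)-π(x)η(x))^{(1-a)y}`
`· (1-μ(x)-(1-π(x))η(x))^{a(1-y)} (1-μ(x)+π(x)η(x))^{(1-a)(1-y)}`. -/
def covDens (d : ℕ) (pX μ π η : (Fin d → ℝ) → ℝ) : CovSample d → ℝ := fun ω =>
  pX ω.1 * (if ω.2.1 then π ω.1 else 1 - π ω.1) *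
    (if ω.2.1 then
      (if ω.2.2 then μ ω.1 + (1 - π ω.1) * η ω.1
       else 1 - (μ ω.1 + (1 - π ω.1) * η ω.1))
     else
      (if ω.2.2 then μ ω.1 - π ω.1 * η ω.1
       else 1 - (μ ω.1 - π ω.1 * η ω.1)))

/-- The joint law of one observation `(X, A, Y)` in the binary model. -/
def covLaw (d : ℕ) (pX μ π η : (Fin d → ℝ) → ℝ) : Measure (CovSample d) :=
  ((volume : Measure (Fin d → ℝ)).prod
    ((Measure.count : Measure Bool).prod Measure.count)).withDensity
    fun ω => ENNReal.ofReal (covDens d pX μ π η ω)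

/-- The expected conditional covariance functional `ψ = E[AY] - ∫ π μ p_X`. -/
def covFunc (d : ℕ) (pX μ π η : (Fin d → ℝ) → ℝ) : ℝ :=
  (∫ ω, (if ω.2.1 then (1 : ℝ) else 0) * (if ω.2.2 then (1 : ℝ) else 0)
      ∂(covLaw d pX μ π η)) -
    ∫ x, π x * μ x * pX x

/-- The unit cube `[0,1]^d`. -/
def cube (d : ℕ) : Set (Fin d → ℝ) := Set.univ.pi fun _ => Set.Icc 0 1

/-- The uniform density on the unit cube. -/
def unifCube (d : ℕ) : (Fin d → ℝ) → ℝ := (cube d).indicator 1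

lemma covLaw_map (d : ℕ) (pX μ π η : (Fin d → ℝ) → ℝ) (hpX : Measurable pX) (h0 : ∀ x, 0 ≤ pX x)
    (hμ : Measurable μ) (hπ : Measurable π) (hη : Measurable η)
    (h2 : ∀ x, 0 ≤ π x ∧ π x ≤ 1)
    (h3 : ∀ x, 0 ≤ μ x + (1 - π x) * η x ∧ μ x + (1 - π x) * η x ≤ 1)
    (h4 : ∀ x, 0 ≤ μ x - π x * η x ∧ μ x - π x * η x ≤ 1) :
    (covLaw d pX μ π η).map Prod.fst = volume.withDensity (fun x => ENNReal.ofReal (pX x)) := by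
  have hm : Measurable (covDens d pX μ π η) := by
    unfold covDens
    have e1 : MeasurableSet {ω : CovSample d | ω.2.1 = true} :=
      (measurable_fst.comp measurable_snd) (measurableSet_singleton true)
    have e2 : MeasurableSet {ω : CovSample d | ω.2.2 = true} :=
      (measurable_snd.comp measurable_snd) (measurableSet_singleton true)
    refine Measurable.mul (Measurable.mul (by fun_prop) (Measurable.ite e1 (by fun_prop) (by fun_prop))) (Measurable.ite e1 (Measurable.ite e2 (by fun_prop) (by fun_prop)) (Measurable.ite e2 (by fun_prop) (by fun_prop)))
  have key : ∀ f : (Fin d → ℝ) → ℝ≥0∞, Measurable f →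
      ∫⁻ ω, f ω.1 ∂(covLaw d pX μ π η) = ∫⁻ x, f x * ENNReal.ofReal (pX x) := by
    intro f hf
    unfold covLaw
    rw [lintegral_withDensity_eq_lintegral_mul _ (by fun_prop) (by fun_prop),
      lintegral_prod _ (by fun_prop)]
    refine lintegral_congr fun x => ?_
    rw [lintegral_prod _ (by fun_prop)]
    simp only [lintegral_count, tsum_fintype, Fintype.sum_bool, Pi.mul_apply, covDens]
    obtain ⟨a1, a2⟩ := h2 x
    obtain ⟨b1, b2⟩ := h3 x
    obtain ⟨c1, c2⟩ := h4 x
    simp only [if_true, Bool.false_eq_true, if_false]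
    rw [← add_mul, ← add_mul, ← add_mul, mul_comm]
    congr 1
    have p := h0 x
    have a3 := sub_nonneg.2 a2
    have b3 := sub_nonneg.2 b2
    have c3 := sub_nonneg.2 c2
    rw [← ENNReal.ofReal_add (by positivity) (by positivity),
      ← ENNReal.ofReal_add (by positivity) (by positivity),
      ← ENNReal.ofReal_add (by positivity) (by positivity)]
    congr 1
    ring
  ext s hs
  rw [Measure.map_apply measurable_fst hs, withDensity_apply _ hs, ← lintegral_indicator_one
    (measurable_fst hs), ← lintegral_indicator hs]
  have := key (s.indicator 1) (measurable_one.indicator hs)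
  refine Eq.trans ?_ (this.trans ?_)
  · rfl
  refine lintegral_congr fun x => ?_
  by_cases hx : x ∈ s <;> simp [hx]

lemma mse_bound {Ω : Type*} [MeasurableSpace Ω] (P : Measure Ω) [IsProbabilityMeasure P]
    (Z : Ω → ℝ) (hZ : Measurable Z) (hb : ∀ ω, Z ω ∈ Set.Icc (-1 : ℝ) 1) (n : ℕ) (hn : 0 < n)
    (ψ : ℝ) :
    ∫⁻ ω, ENNReal.ofReal (((1 / (n : ℝ)) * (∑ i : Fin n, Z (ω i)) - ψ) ^ 2)
      ∂(Measure.pi fun _ : Fin n => P) ≤ ENNReal.ofReal (1 / n + ((∫ ω, Z ω ∂P) - ψ) ^ 2) := by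
  have hn' : (0 : ℝ) < n := by exact_mod_cast hn
  have hL : MemLp Z 2 P := MemLp.of_bound hZ.aestronglyMeasurable 1
    (Filter.Eventually.of_forall fun ω => by
      rw [Real.norm_eq_abs]; exact abs_le.2 ⟨(hb ω).1, (hb ω).2⟩)
  set PP := Measure.pi fun _ : Fin n => P with hPP
  have hLi : ∀ i : Fin n, MemLp (fun ω : Fin n → Ω => Z (ω i)) 2 PP := fun i =>
    hL.comp_measurePreserving (measurePreserving_eval (fun _ : Fin n => P) i)
  have hLS : MemLp (fun ω : Fin n → Ω => ∑ i : Fin n, Z (ω i)) 2 PP :=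
    memLp_finsetSum _ fun i _ => hLi i
  set S : (Fin n → Ω) → ℝ := fun ω => (1 / (n : ℝ)) * (∑ i : Fin n, Z (ω i)) with hS
  have hLT : MemLp S 2 PP := hLS.const_mul _
  have hLU : MemLp (fun ω => S ω - ψ) 2 PP := hLT.sub (memLp_const ψ)
  have hE : ∫ ω, S ω ∂PP = ∫ ω, Z ω ∂P := by
    rw [hS, integral_const_mul, integral_finsetSum _ fun i _ => (hLi i).integrable one_le_two]
    have : ∀ i : Fin n, ∫ ω, Z (ω i) ∂PP = ∫ ω, Z ω ∂P := fun i =>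
      integral_comp_eval (μ := fun _ : Fin n => P) hZ.aestronglyMeasurable
    simp only [this]
    simp
    field_simp
  have hV : ProbabilityTheory.variance S PP ≤ 1 / n := by
    rw [hS, ProbabilityTheory.variance_const_mul]
    have h1 := ProbabilityTheory.variance_sum_pi (μ := fun _ : Fin n => P) (X := fun _ => Z)
      fun _ => hL
    have h2 : (∑ i : Fin n, fun ω : Fin n → Ω => Z (ω i)) = fun ω => ∑ i, Z (ω i) := by
      ext ω; simp
    rw [h2] at h1
    rw [h1]
    have h3 := ProbabilityTheory.variance_le_sq_of_bounded (μ := P)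
      (Filter.Eventually.of_forall hb) hZ.aemeasurable
    norm_num at h3
    simp only [Finset.sum_const, Finset.card_univ, Fintype.card_fin, nsmul_eq_mul]
    calc (1 / (n : ℝ)) ^ 2 * (n * ProbabilityTheory.variance Z P)
        = 1 / n * ProbabilityTheory.variance Z P := by field_simp
      _ ≤ 1 / n * 1 := by gcongr
      _ = 1 / n := mul_one _
  rw [← ofReal_integral_eq_lintegral_ofReal hLU.integrable_sq
    (Filter.Eventually.of_forall fun ω => sq_nonneg _)]
  apply ENNReal.ofReal_le_ofReal
  have h5 := ProbabilityTheory.variance_eq_sub hLU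
  rw [ProbabilityTheory.variance_sub_const hLT.aestronglyMeasurable] at h5
  rw [integral_sub (hLT.integrable one_le_two) (integrable_const _), hE] at h5
  simp only [Pi.pow_apply, integral_const, probReal_univ, one_smul] at h5
  linarith

/-- Theorem 2, part 3, plugin: if the truth lies in `𝒢(rₙ, sₙ)` then the
plugin estimator `ψ̂_pi = (1/n)∑ᵢ AᵢYᵢ - (1/n)∑ᵢ π̂(Xᵢ)μ̂(Xᵢ)` of the expected conditional
covariance satisfies `E(ψ̂_pi - ψ^cov)² ≲ rₙ sₙ + rₙ + sₙ + 1/n`. -/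
theorem stmt8 :
    ∃ C > (0 : ℝ),
      ∀ (d n : ℕ), 0 < n →
      ∀ pX : (Fin d → ℝ) → ℝ, Measurable pX → (∀ x, 0 ≤ pX x) → (∫ x, pX x = 1) →
      ∀ μ π η : (Fin d → ℝ) → ℝ, Measurable μ → Measurable π → Measurable η →
        (∀ x, 0 ≤ μ x ∧ μ x ≤ 1) → (∀ x, 0 ≤ π x ∧ π x ≤ 1) →
        (∀ x, 0 ≤ μ x + (1 - π x) * η x ∧ μ x + (1 - π x) * η x ≤ 1) →
        (∀ x, 0 ≤ μ x - π x * η x ∧ μ x - π x * η x ≤ 1) →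
      ∀ muhat pihat : (Fin d → ℝ) → ℝ, Measurable muhat → Measurable pihat →
        (∀ x, 0 ≤ muhat x ∧ muhat x ≤ 1) → (∀ x, 0 ≤ pihat x ∧ pihat x ≤ 1) →
      ∀ r s : ℝ, 0 < r → 0 < s →
        Integrable (fun x => (μ x - muhat x) ^ 2 * pX x) →
        (∫ x, (μ x - muhat x) ^ 2 * pX x) ≤ r →
        Integrable (fun x => (π x - pihat x) ^ 2 * pX x) →
        (∫ x, (π x - pihat x) ^ 2 * pX x) ≤ s →
      ∫⁻ ω, ENNReal.ofReal
          ((((1 : ℝ) / n) * (∑ i : Fin n,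
              (if (ω i).2.1 then (1 : ℝ) else 0) * (if (ω i).2.2 then (1 : ℝ) else 0)) -
            ((1 : ℝ) / n) * (∑ i : Fin n, pihat (ω i).1 * muhat (ω i).1) -
            covFunc d pX μ π η) ^ 2)
          ∂(Measure.pi fun _ : Fin n => covLaw d pX μ π η) ≤
        ENNReal.ofReal (C * (r * s + r + s + 1 / n)) := by
  refine ⟨2, by norm_num, ?_⟩
  intro d n hn pX hpX h0 hint μ π η hμ hπ hη h1 h2 h3 h4 muhat pihat hmh hph h5 h6 r s hr hs
    i1 j1 i2 j2
  have hn' : (0 : ℝ) < n := by exact_mod_cast hn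
  have hmap := covLaw_map d pX μ π η hpX h0 hμ hπ hη h2 h3 h4
  set P := covLaw d pX μ π η with hP
  set Q := volume.withDensity (fun x => ENNReal.ofReal (pX x)) with hQ
  have hpI : Integrable pX := by
    by_contra h
    rw [integral_undef h] at hint
    norm_num at hint
  have hQp : IsProbabilityMeasure Q := ⟨by
    rw [hQ, withDensity_apply _ MeasurableSet.univ, Measure.restrict_univ,
      ← ofReal_integral_eq_lintegral_ofReal hpI (Filter.Eventually.of_forall h0), hint,
      ENNReal.ofReal_one]⟩
  have hPp : IsProbabilityMeasure P := ⟨by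
    have : P.map Prod.fst Set.univ = 1 := by rw [hmap]; exact measure_univ
    rwa [Measure.map_apply measurable_fst MeasurableSet.univ, Set.preimage_univ] at this⟩
  have hQi : ∀ g : (Fin d → ℝ) → ℝ, ∫ x, g x ∂Q = ∫ x, g x * pX x := by
    intro g
    rw [hQ, integral_withDensity_eq_integral_toReal_smul (by fun_prop)
      (Filter.Eventually.of_forall fun x => ENNReal.ofReal_lt_top)]
    refine integral_congr_ae (Filter.Eventually.of_forall fun x => ?_)
    simp only [ENNReal.toReal_ofReal (h0 x), smul_eq_mul, mul_comm]
  have hbd : ∀ g : (Fin d → ℝ) → ℝ, Measurable g → (∀ x, g x ∈ Set.Icc (-1 : ℝ) 1) →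
      MemLp g 2 Q := fun g hg hb => MemLp.of_bound hg.aestronglyMeasurable 1
    (Filter.Eventually.of_forall fun ω => by
      rw [Real.norm_eq_abs]; exact abs_le.2 ⟨(hb ω).1, (hb ω).2⟩)
  have e1 : MeasurableSet {ω : CovSample d | ω.2.1 = true} :=
    (measurable_fst.comp measurable_snd) (measurableSet_singleton true)
  have e2 : MeasurableSet {ω : CovSample d | ω.2.2 = true} :=
    (measurable_snd.comp measurable_snd) (measurableSet_singleton true)
  set W : CovSample d → ℝ := fun ω =>
    (if ω.2.1 then (1 : ℝ) else 0) * (if ω.2.2 then (1 : ℝ) else 0) with hW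
  have hWm : Measurable W := Measurable.mul
    (Measurable.ite e1 measurable_const measurable_const)
    (Measurable.ite e2 measurable_const measurable_const)
  have hWb : ∀ ω, 0 ≤ W ω ∧ W ω ≤ 1 := by
    intro ω
    simp only [hW]
    split_ifs <;> norm_num
  have hprod : ∀ x, 0 ≤ pihat x * muhat x ∧ pihat x * muhat x ≤ 1 := fun x =>
    ⟨mul_nonneg (h6 x).1 (h5 x).1, mul_le_one₀ (h6 x).2 (h5 x).1 (h5 x).2⟩
  have hprod' : ∀ x, 0 ≤ π x * μ x ∧ π x * μ x ≤ 1 := fun x =>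
    ⟨mul_nonneg (h2 x).1 (h1 x).1, mul_le_one₀ (h2 x).2 (h1 x).1 (h1 x).2⟩
  have main := mse_bound P (fun ω => W ω - pihat ω.1 * muhat ω.1) (by fun_prop)
    (fun ω => ⟨by linarith [(hWb ω).1, (hprod ω.1).2], by linarith [(hWb ω).2, (hprod ω.1).1]⟩)
    n hn (covFunc d pX μ π η)
  have hL1 : MemLp (fun x => pihat x * muhat x) 2 Q := hbd _ (by fun_prop) fun x =>
    ⟨by linarith [(hprod x).1], (hprod x).2⟩
  have hL2 : MemLp (fun x => π x * μ x) 2 Q := hbd _ (by fun_prop) fun x =>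
    ⟨by linarith [(hprod' x).1], (hprod' x).2⟩
  have hL3 : MemLp (fun x => π x - pihat x) 2 Q := hbd _ (by fun_prop) fun x =>
    ⟨by linarith [(h2 x).1, (h6 x).2], by linarith [(h2 x).2, (h6 x).1]⟩
  have hL4 : MemLp (fun x => μ x - muhat x) 2 Q := hbd _ (by fun_prop) fun x =>
    ⟨by linarith [(h1 x).1, (h5 x).2], by linarith [(h1 x).2, (h5 x).1]⟩
  have hL5 : MemLp (fun x => π x * μ x - pihat x * muhat x) 2 Q := hL2.sub hL1
  have hWi : Integrable W P := Integrable.of_bound hWm.aestronglyMeasurable 1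
    (Filter.Eventually.of_forall fun ω => by
      rw [Real.norm_eq_abs, abs_of_nonneg (hWb ω).1]; exact (hWb ω).2)
  have hGi : Integrable (fun ω : CovSample d => pihat ω.1 * muhat ω.1) P := by
    have := hL1.integrable one_le_two
    rw [← hmap] at this
    exact this.comp_measurable measurable_fst
  have hG : ∫ ω : CovSample d, pihat ω.1 * muhat ω.1 ∂P = ∫ x, pihat x * muhat x ∂Q := by
    rw [← hmap, integral_map measurable_fst.aemeasurable
      (Measurable.aestronglyMeasurable (by fun_prop))]
  have hbias : (∫ ω, W ω - pihat ω.1 * muhat ω.1 ∂P) - covFunc d pX μ π η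
      = ∫ x, π x * μ x - pihat x * muhat x ∂Q := by
    rw [integral_sub hWi hGi, hG, integral_sub (hL2.integrable one_le_two)
      (hL1.integrable one_le_two), hQi (fun x => π x * μ x), covFunc, ← hP]
    ring
  have hb2 : (∫ x, π x * μ x - pihat x * muhat x ∂Q) ^ 2 ≤ 2 * s + 2 * r := by
    have v := ProbabilityTheory.variance_eq_sub hL5
    have v0 := ProbabilityTheory.variance_nonneg
      (fun x => π x * μ x - pihat x * muhat x) Q
    simp only [Pi.pow_apply] at v
    have hle : ∫ x, (π x * μ x - pihat x * muhat x) ^ 2 ∂Q ≤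
        ∫ x, (2 * (π x - pihat x) ^ 2 + 2 * (μ x - muhat x) ^ 2) ∂Q := by
      refine integral_mono hL5.integrable_sq
        ((hL3.integrable_sq.const_mul 2).add (hL4.integrable_sq.const_mul 2)) fun x => ?_
      have a1 : (π x - pihat x) ^ 2 * μ x ^ 2 ≤ (π x - pihat x) ^ 2 * 1 :=
        mul_le_mul_of_nonneg_left (pow_le_one₀ (h1 x).1 (h1 x).2) (sq_nonneg _)
      have a2 : (μ x - muhat x) ^ 2 * pihat x ^ 2 ≤ (μ x - muhat x) ^ 2 * 1 :=
        mul_le_mul_of_nonneg_left (pow_le_one₀ (h6 x).1 (h6 x).2) (sq_nonneg _)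
      have a3 := sq_nonneg ((π x - pihat x) * μ x - (μ x - muhat x) * pihat x)
      show (π x * μ x - pihat x * muhat x) ^ 2 ≤
        2 * (π x - pihat x) ^ 2 + 2 * (μ x - muhat x) ^ 2
      nlinarith
    rw [integral_add (hL3.integrable_sq.const_mul 2) (hL4.integrable_sq.const_mul 2),
      integral_const_mul, integral_const_mul, hQi (fun x => (π x - pihat x) ^ 2),
      hQi (fun x => (μ x - muhat x) ^ 2)] at hle
    linarith
  rw [hbias] at main
  have hL : ∀ ω : Fin n → CovSample d,
      (1 : ℝ) / n * (∑ i : Fin n, (W (ω i) - pihat (ω i).1 * muhat (ω i).1)) =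
      (1 : ℝ) / n * (∑ i : Fin n, W (ω i)) -
        (1 : ℝ) / n * (∑ i : Fin n, pihat (ω i).1 * muhat (ω i).1) := by
    intro ω
    rw [Finset.sum_sub_distrib, mul_sub]
  simp only [hL] at main
  refine main.trans (ENNReal.ofReal_le_ofReal ?_)
  have : 0 < r * s := mul_pos hr hs
  have : 0 < 1 / (n : ℝ) := by positivity
  linarith
end
end

section
/- For the expected conditional covariance, if the truth lies in G(r_n, s_n) then the first-order estimator ψ̂_fo = (1/n) Σ_{i=1}^n (A_i − π̂(X_i))(Y_i − μ̂(X_i)) satisfies E(ψ̂_fo − ψ^cov)² ≲ r_n · s_n + 1/n, up to a universal positive constant. -/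
open MeasureTheory
open scoped ENNReal NNReal

noncomputable section

lemma aux_dens_bound (d : ℕ) (pX μ π η : (Fin d → ℝ) → ℝ) (hp : ∀ x, 0 ≤ pX x)
    (hπ : ∀ x, 0 ≤ π x ∧ π x ≤ 1)
    (h1 : ∀ x, 0 ≤ μ x + (1 - π x) * η x ∧ μ x + (1 - π x) * η x ≤ 1)
    (h0 : ∀ x, 0 ≤ μ x - π x * η x ∧ μ x - π x * η x ≤ 1) (ω : CovSample d) :
    0 ≤ covDens d pX μ π η ω ∧ covDens d pX μ π η ω ≤ pX ω.1 := by
  obtain ⟨x, a, y⟩ := ω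
  have hb : ∀ p b c : ℝ, 0 ≤ p → 0 ≤ b → b ≤ 1 → 0 ≤ c → c ≤ 1 →
      0 ≤ p * b * c ∧ p * b * c ≤ p := by
    intro p b c hp hb hb1 hc hc1
    refine ⟨by positivity, ?_⟩
    rw [mul_assoc]
    exact mul_le_of_le_one_right hp (mul_le_one₀ hb1 hc hc1)
  obtain ⟨a1, a2⟩ := hπ x
  obtain ⟨b1, b2⟩ := h1 x
  obtain ⟨c1, c2⟩ := h0 x
  cases a <;> cases y <;> simp only [covDens, if_true, if_false, Bool.false_eq_true] <;>
    apply hb _ _ _ (hp x) <;> linarith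

lemma aux_dens_meas (d : ℕ) (pX μ π η : (Fin d → ℝ) → ℝ) (mp : Measurable pX)
    (mμ : Measurable μ) (mπ : Measurable π) (mη : Measurable η) :
    Measurable (covDens d pX μ π η) := by
  have ha : MeasurableSet {ω : CovSample d | ω.2.1 = true} :=
    measurable_snd.fst (measurableSet_singleton true)
  have hy : MeasurableSet {ω : CovSample d | ω.2.2 = true} :=
    measurable_snd.snd (measurableSet_singleton true)
  unfold covDens
  refine Measurable.mul (Measurable.mul (by fun_prop) ?_) ?_
  · exact Measurable.ite ha (by fun_prop) (by fun_prop)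
  · exact Measurable.ite ha (Measurable.ite hy (by fun_prop) (by fun_prop))
      (Measurable.ite hy (by fun_prop) (by fun_prop))

lemma aux_formula (d : ℕ) (pX μ π η : (Fin d → ℝ) → ℝ) (mp : Measurable pX)
    (hp : ∀ x, 0 ≤ pX x) (ip : Integrable pX)
    (mμ : Measurable μ) (mπ : Measurable π) (mη : Measurable η)
    (hπ : ∀ x, 0 ≤ π x ∧ π x ≤ 1)
    (h1 : ∀ x, 0 ≤ μ x + (1 - π x) * η x ∧ μ x + (1 - π x) * η x ≤ 1)
    (h0 : ∀ x, 0 ≤ μ x - π x * η x ∧ μ x - π x * η x ≤ 1)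
    (f : CovSample d → ℝ) (mf : Measurable f) (hf : ∀ ω, |f ω| ≤ 1) :
    Integrable (fun ω => covDens d pX μ π η ω * f ω) ((volume : Measure (Fin d → ℝ)).prod
      ((Measure.count : Measure Bool).prod Measure.count)) ∧
    ∫ ω, f ω ∂(covLaw d pX μ π η) = ∫ x,
      (covDens d pX μ π η (x, true, true) * f (x, true, true)
      + covDens d pX μ π η (x, true, false) * f (x, true, false)
      + covDens d pX μ π η (x, false, true) * f (x, false, true)
      + covDens d pX μ π η (x, false, false) * f (x, false, false)) := by
  have md := aux_dens_meas d pX μ π η mp mμ mπ mη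
  have bd := aux_dens_bound d pX μ π η hp hπ h1 h0
  have hint : Integrable (fun ω => covDens d pX μ π η ω * f ω)
      ((volume : Measure (Fin d → ℝ)).prod
      ((Measure.count : Measure Bool).prod Measure.count)) := by
    refine Integrable.mono' (ip.comp_fst _) (md.mul mf).aestronglyMeasurable
      (Filter.Eventually.of_forall fun ω => ?_)
    rw [Real.norm_eq_abs, abs_mul, abs_of_nonneg (bd ω).1]
    exact (mul_le_of_le_one_right (bd ω).1 (hf ω)).trans (bd ω).2
  refine ⟨hint, ?_⟩
  unfold covLaw
  rw [integral_withDensity_eq_integral_toReal_smul md.ennreal_ofReal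
    (Filter.Eventually.of_forall fun _ => ENNReal.ofReal_lt_top)]
  have e : (fun ω => (ENNReal.ofReal (covDens d pX μ π η ω)).toReal • f ω)
      = fun ω => covDens d pX μ π η ω * f ω := by
    funext ω
    rw [ENNReal.toReal_ofReal (bd ω).1, smul_eq_mul]
  rw [e, integral_prod _ hint]
  congr 1
  funext x
  rw [integral_prod _ (Integrable.of_finite)]
  simp [integral_fintype, Measure.real]
  ring

lemma aux_prob (d : ℕ) (pX μ π η : (Fin d → ℝ) → ℝ) (mp : Measurable pX)
    (hp : ∀ x, 0 ≤ pX x) (ip : Integrable pX) (ip1 : ∫ x, pX x = 1)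
    (mμ : Measurable μ) (mπ : Measurable π) (mη : Measurable η)
    (hπ : ∀ x, 0 ≤ π x ∧ π x ≤ 1)
    (h1 : ∀ x, 0 ≤ μ x + (1 - π x) * η x ∧ μ x + (1 - π x) * η x ≤ 1)
    (h0 : ∀ x, 0 ≤ μ x - π x * η x ∧ μ x - π x * η x ≤ 1) :
    IsProbabilityMeasure (covLaw d pX μ π η) := by
  obtain ⟨hi, hF⟩ := aux_formula d pX μ π η mp hp ip mμ mπ mη hπ h1 h0 (fun _ => 1)
    measurable_const (by simp)
  have e : ∀ x, (covDens d pX μ π η (x, true, true) * 1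
      + covDens d pX μ π η (x, true, false) * 1
      + covDens d pX μ π η (x, false, true) * 1
      + covDens d pX μ π η (x, false, false) * 1) = pX x := by
    intro x
    simp only [covDens, if_true, if_false, Bool.false_eq_true]
    ring
  rw [integral_congr_ae (Filter.Eventually.of_forall e), ip1] at hF
  simp only [integral_const, smul_eq_mul, mul_one] at hF
  constructor
  rw [Measure.real, ENNReal.toReal_eq_one_iff] at hF
  exact hF

lemma aux_cs {α : Type*} [MeasurableSpace α] (m : Measure α) (u v p : α → ℝ)
    (hp : ∀ x, 0 ≤ p x) (hu : Integrable (fun x => u x ^ 2 * p x) m)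
    (hv : Integrable (fun x => v x ^ 2 * p x) m)
    (huv : Integrable (fun x => u x * v x * p x) m) :
    (∫ x, u x * v x * p x ∂m) ^ 2 ≤ (∫ x, u x ^ 2 * p x ∂m) * ∫ x, v x ^ 2 * p x ∂m := by
  have key : ∀ t : ℝ, 0 ≤ (∫ x, u x ^ 2 * p x ∂m) * (t * t)
      + (2 * ∫ x, u x * v x * p x ∂m) * t + ∫ x, v x ^ 2 * p x ∂m := by
    intro t
    have : 0 ≤ ∫ x, (t * u x + v x) ^ 2 * p x ∂m :=
      integral_nonneg fun x => mul_nonneg (sq_nonneg _) (hp x)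
    have e : (fun x => (t * u x + v x) ^ 2 * p x) = fun x =>
        (t * t) * (u x ^ 2 * p x) + (2 * t) * (u x * v x * p x) + v x ^ 2 * p x := by
      funext x; ring
    have hadd : Integrable (fun x => (t * t) * (u x ^ 2 * p x)
        + (2 * t) * (u x * v x * p x)) m := (hu.const_mul _).add (huv.const_mul _)
    rw [e, integral_add hadd hv,
      integral_add (hu.const_mul _) (huv.const_mul _), integral_const_mul,
      integral_const_mul] at this
    linarith
  have := discrim_le_zero key
  unfold discrim at this
  nlinarith

lemma aux_mse {α : Type*} [MeasurableSpace α] (P : Measure α) [IsProbabilityMeasure P]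
    (n : ℕ) (hn : 0 < n) (Z : α → ℝ) (mZ : Measurable Z) (hZ : ∀ ω, |Z ω| ≤ 1) (c : ℝ) :
    ∫⁻ ω, ENNReal.ofReal ((((1 : ℝ) / n) * (∑ i : Fin n, Z (ω i)) - c) ^ 2)
      ∂(Measure.pi fun _ : Fin n => P) ≤ ENNReal.ofReal (((∫ ω, Z ω ∂P) - c) ^ 2 + 1 / n) := by
  have hn' : (0 : ℝ) < n := by exact_mod_cast hn
  set Q := Measure.pi fun _ : Fin n => P with hQ
  have mp : ∀ i : Fin n, MeasurePreserving (Function.eval i) Q P := fun i =>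
    measurePreserving_eval (fun _ : Fin n => P) i
  have LZ : MemLp Z 2 P := MemLp.of_bound mZ.aestronglyMeasurable 1
    (Filter.Eventually.of_forall hZ)
  have Li : ∀ i : Fin n, MemLp (fun ω : Fin n → α => Z (ω i)) 2 Q := fun i =>
    LZ.comp_measurePreserving (mp i)
  have hE : ∀ i : Fin n, ∫ ω, Z (ω i) ∂Q = ∫ ω, Z ω ∂P := by
    intro i
    rw [← (mp i).map_eq, integral_map (mp i).aemeasurable mZ.aestronglyMeasurable]
  have hV : ∀ i : Fin n, ProbabilityTheory.variance (fun ω : Fin n → α => Z (ω i)) Q ≤ 1 := by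
    intro i
    refine (ProbabilityTheory.variance_le_expectation_sq (Li i).aestronglyMeasurable).trans ?_
    have : ∫ ω, ((fun ω : Fin n → α => Z (ω i)) ^ 2) ω ∂Q ≤ ∫ ω, (1 : ℝ) ∂Q := by
      refine integral_mono (Li i).integrable_sq (integrable_const _) fun ω => ?_
      have := hZ (ω i)
      simpa [sq_le_one_iff_abs_le_one] using this
    simpa using this
  have hind : ProbabilityTheory.iIndepFun (fun (i : Fin n) (ω : Fin n → α) => Z (ω i)) Q :=
    ProbabilityTheory.iIndepFun_pi (X := fun _ => Z) fun _ => mZ.aemeasurable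
  have hsum := ProbabilityTheory.IndepFun.variance_sum (s := Finset.univ)
    (fun i _ => Li i) (fun i _ j _ hij => hind.indepFun hij)
  set T : (Fin n → α) → ℝ := fun ω => ((1 : ℝ) / n) * (∑ i : Fin n, Z (ω i)) with hT
  have LS : MemLp (fun ω : Fin n → α => ∑ i : Fin n, Z (ω i)) 2 Q :=
    memLp_finsetSum _ fun i _ => Li i
  have LT : MemLp T 2 Q := LS.const_mul _
  have ET : ∫ ω, T ω ∂Q = ∫ ω, Z ω ∂P := by
    rw [hT, integral_const_mul, integral_finsetSum _ fun i _ => (Li i).integrable (by norm_num)]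
    simp only [hE, Finset.sum_const, Finset.card_univ, Fintype.card_fin, nsmul_eq_mul]
    field_simp
  have VT : ProbabilityTheory.variance T Q ≤ 1 / n := by
    rw [hT, ProbabilityTheory.variance_const_mul]
    have e : (fun ω : Fin n → α => ∑ i : Fin n, Z (ω i))
      = ∑ i : Fin n, fun ω : Fin n → α => Z (ω i) := by
      funext ω; simp
    rw [e, hsum]
    have : ∑ i : Fin n, ProbabilityTheory.variance (fun ω : Fin n → α => Z (ω i)) Q ≤ n := by
      refine (Finset.sum_le_sum fun i _ => hV i).trans (by simp)
    calc ((1 : ℝ) / n) ^ 2 * _ ≤ ((1 : ℝ) / n) ^ 2 * n :=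
          mul_le_mul_of_nonneg_left this (by positivity)
      _ = 1 / n := by field_simp
  have LTc : MemLp (fun ω => T ω - c) 2 Q := LT.sub (memLp_const c)
  change ∫⁻ ω, ENNReal.ofReal ((T ω - c) ^ 2) ∂Q ≤ _
  rw [← ofReal_integral_eq_lintegral_ofReal LTc.integrable_sq
    (Filter.Eventually.of_forall fun _ => sq_nonneg _)]
  apply ENNReal.ofReal_le_ofReal
  have v1 := ProbabilityTheory.variance_eq_sub LTc
  have v2 : ProbabilityTheory.variance (fun ω => T ω - c) Q = ProbabilityTheory.variance T Q :=
    ProbabilityTheory.variance_sub_const LT.aestronglyMeasurable c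
  have e1 : ∫ ω, (T ω - c) ∂Q = (∫ ω, Z ω ∂P) - c := by
    rw [integral_sub (LT.integrable (by norm_num)) (integrable_const _), ET]
    simp
  rw [v2, e1] at v1
  simp only [Pi.pow_apply] at v1
  linarith

/-- Theorem 2, part 3, first-order: if the truth lies in `𝒢(rₙ, sₙ)` then
the first-order estimator `ψ̂_fo = (1/n)∑ᵢ (Aᵢ - π̂(Xᵢ))(Yᵢ - μ̂(Xᵢ))` of the expected
conditional covariance satisfies `E(ψ̂_fo - ψ^cov)² ≲ rₙ sₙ + 1/n`. -/
theorem stmt9 :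
    ∃ C > (0 : ℝ),
      ∀ (d n : ℕ), 0 < n →
      ∀ pX : (Fin d → ℝ) → ℝ, Measurable pX → (∀ x, 0 ≤ pX x) → (∫ x, pX x = 1) →
      ∀ μ π η : (Fin d → ℝ) → ℝ, Measurable μ → Measurable π → Measurable η →
        (∀ x, 0 ≤ μ x ∧ μ x ≤ 1) → (∀ x, 0 ≤ π x ∧ π x ≤ 1) →
        (∀ x, 0 ≤ μ x + (1 - π x) * η x ∧ μ x + (1 - π x) * η x ≤ 1) →
        (∀ x, 0 ≤ μ x - π x * η x ∧ μ x - π x * η x ≤ 1) →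
      ∀ muhat pihat : (Fin d → ℝ) → ℝ, Measurable muhat → Measurable pihat →
        (∀ x, 0 ≤ muhat x ∧ muhat x ≤ 1) → (∀ x, 0 ≤ pihat x ∧ pihat x ≤ 1) →
      ∀ r s : ℝ, 0 < r → 0 < s →
        Integrable (fun x => (μ x - muhat x) ^ 2 * pX x) →
        (∫ x, (μ x - muhat x) ^ 2 * pX x) ≤ r →
        Integrable (fun x => (π x - pihat x) ^ 2 * pX x) →
        (∫ x, (π x - pihat x) ^ 2 * pX x) ≤ s →
      ∫⁻ ω, ENNReal.ofReal
          ((((1 : ℝ) / n) * (∑ i : Fin n,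
              ((if (ω i).2.1 then (1 : ℝ) else 0) - pihat (ω i).1) *
              ((if (ω i).2.2 then (1 : ℝ) else 0) - muhat (ω i).1)) -
            covFunc d pX μ π η) ^ 2)
          ∂(Measure.pi fun _ : Fin n => covLaw d pX μ π η) ≤
        ENNReal.ofReal (C * (r * s + 1 / n)) := by
  refine ⟨1, one_pos, ?_⟩
  intro d n hn pX mp hp ip1 μ π η mμ mπ mη hμ hπ h1 h0 muhat pihat mmh mph hmh hph r s hr hs
    iu hu iv hv
  have ip : Integrable pX := by
    by_contra h
    rw [integral_undef h] at ip1
    exact zero_ne_one ip1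
  have := aux_prob d pX μ π η mp hp ip ip1 mμ mπ mη hπ h1 h0
  have ha : MeasurableSet {ω : CovSample d | ω.2.1 = true} :=
    measurable_snd.fst (measurableSet_singleton true)
  have hy : MeasurableSet {ω : CovSample d | ω.2.2 = true} :=
    measurable_snd.snd (measurableSet_singleton true)
  have mA : Measurable fun ω : CovSample d => if ω.2.1 then (1 : ℝ) else 0 :=
    Measurable.ite ha measurable_const measurable_const
  have mY : Measurable fun ω : CovSample d => if ω.2.2 then (1 : ℝ) else 0 :=
    Measurable.ite hy measurable_const measurable_const
  have bB : ∀ b : Bool, ∀ t : ℝ, 0 ≤ t ∧ t ≤ 1 → |(if b then (1 : ℝ) else 0) - t| ≤ 1 := by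
    intro b t ht
    rw [abs_le]
    cases b <;> simp <;> constructor <;> linarith [ht.1, ht.2]
  have bI : ∀ w : (Fin d → ℝ) → ℝ, Measurable w → (∀ x, |w x| ≤ 1) →
      Integrable (fun x => w x * pX x) := by
    intro w mw hw
    refine Integrable.mono' ip (mw.mul mp).aestronglyMeasurable
      (Filter.Eventually.of_forall fun x => ?_)
    rw [Real.norm_eq_abs, abs_mul, abs_of_nonneg (hp x)]
    exact mul_le_of_le_one_left (hp x) (hw x)
  set Z : CovSample d → ℝ := fun ω => ((if ω.2.1 then (1 : ℝ) else 0) - pihat ω.1) *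
    ((if ω.2.2 then (1 : ℝ) else 0) - muhat ω.1) with hZdef
  have mZ : Measurable Z :=
    (mA.sub (mph.comp measurable_fst)).mul (mY.sub (mmh.comp measurable_fst))
  have bZ : ∀ ω, |Z ω| ≤ 1 := by
    intro ω
    rw [hZdef, abs_mul]
    exact mul_le_one₀ (bB _ _ (hph _)) (abs_nonneg _) (bB _ _ (hmh _))
  have main := aux_mse (covLaw d pX μ π η) n hn Z mZ bZ (covFunc d pX μ π η)
  refine main.trans (ENNReal.ofReal_le_ofReal ?_)
  have FZ := (aux_formula d pX μ π η mp hp ip mμ mπ mη hπ h1 h0 Z mZ bZ).2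
  have FA := (aux_formula d pX μ π η mp hp ip mμ mπ mη hπ h1 h0
    (fun ω => (if ω.2.1 then (1 : ℝ) else 0) * (if ω.2.2 then (1 : ℝ) else 0)) (mA.mul mY)
    (by rintro ⟨x, a, y⟩; cases a <;> cases y <;> simp)).2
  have b1 : ∀ x, |π x * (μ x + (1 - π x) * η x)| ≤ 1 := by
    intro x
    rw [abs_mul, abs_of_nonneg (hπ x).1, abs_of_nonneg (h1 x).1]
    exact mul_le_one₀ (hπ x).2 (h1 x).1 (h1 x).2
  have b2 : ∀ x, |π x * μ x| ≤ 1 := by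
    intro x
    rw [abs_mul, abs_of_nonneg (hπ x).1, abs_of_nonneg (hμ x).1]
    exact mul_le_one₀ (hπ x).2 (hμ x).1 (hμ x).2
  have b3 : ∀ x, |(μ x - muhat x) * (π x - pihat x)| ≤ 1 := by
    intro x
    rw [abs_mul]
    refine mul_le_one₀ ?_ (abs_nonneg _) ?_ <;> rw [abs_le] <;>
      constructor <;> linarith [(hμ x).1, (hμ x).2, (hπ x).1, (hπ x).2, (hmh x).1, (hmh x).2,
        (hph x).1, (hph x).2]
  have i1 := bI _ (by fun_prop) b1
  have i2 := bI _ (by fun_prop) b2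
  have i3 := bI _ (by fun_prop) b3
  have bias : (∫ ω, Z ω ∂(covLaw d pX μ π η)) - covFunc d pX μ π η
      = ∫ x, (μ x - muhat x) * (π x - pihat x) * pX x := by
    unfold covFunc
    have eA : ∫ ω, (if ω.2.1 then (1 : ℝ) else 0) * (if ω.2.2 then (1 : ℝ) else 0)
        ∂(covLaw d pX μ π η) = ∫ x, π x * (μ x + (1 - π x) * η x) * pX x := by
      rw [FA]
      congr 1
      funext x
      simp [covDens]
      ring
    have eZ : ∫ ω, Z ω ∂(covLaw d pX μ π η)
        = ∫ x, (π x * (μ x + (1 - π x) * η x) * pX x - π x * μ x * pX x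
          + (μ x - muhat x) * (π x - pihat x) * pX x) := by
      rw [FZ]
      congr 1
      funext x
      simp only [covDens, hZdef, if_true, if_false, Bool.false_eq_true]
      ring
    have i12 : Integrable (fun x => π x * (μ x + (1 - π x) * η x) * pX x
        - π x * μ x * pX x) := i1.sub i2
    rw [eA, eZ, integral_add i12 i3, integral_sub i1 i2]
    ring
  rw [bias, one_mul]
  have cs := aux_cs volume (fun x => μ x - muhat x) (fun x => π x - pihat x) pX hp iu iv i3
  have : (∫ x, (μ x - muhat x) ^ 2 * pX x) * (∫ x, (π x - pihat x) ^ 2 * pX x) ≤ r * s :=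
    mul_le_mul hu hv (integral_nonneg fun x => mul_nonneg (sq_nonneg _) (hp x)) hr.le
  have := cs.trans this
  linarith
end
end

section
/- Constrained risk inequality: fix θ and define D₁ = N(θ, I/n) and D₂ = N((1 + α/‖θ‖₂) θ, I/n). Let P₁ denote one of D₁, D₂ and P₂ the other. If an estimator Q̂ of the quadratic functional satisfies E_{P₁}(Q̂ − Q(P₁))² ≤ β², then E_{P₂}(Q̂ − Q(P₂))² ≥ [α² + 2α‖θ‖₂ − β exp(n α²/2)]₊², where [x]₊ = max(x, 0). -/
open MeasureTheory ProbabilityTheory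
open scoped ENNReal NNReal

noncomputable section

/-- The Gaussian distribution `N(θ, I/n)` on `ℝ^d`. -/
def gaussPi (d n : ℕ) (θ : Fin d → ℝ) : Measure (Fin d → ℝ) :=
  Measure.pi fun i => gaussianReal (θ i) ((n : ℝ≥0))⁻¹

lemma lintegral_pi_prod_aux {d : ℕ} (μ : Fin d → Measure ℝ) [∀ i, IsProbabilityMeasure (μ i)]
    (f : Fin d → ℝ → ℝ≥0∞) (hf : ∀ i, Measurable (f i)) :
    ∫⁻ x, ∏ i, f i (x i) ∂(Measure.pi μ) = ∏ i, ∫⁻ y, f i y ∂(μ i) := by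
  rw [lintegral_prod_eq_prod_lintegral_of_indepFun Finset.univ (fun i (x : Fin d → ℝ) => f i (x i))
    (iIndepFun_pi fun i => (hf i).aemeasurable)
    (fun i => (hf i).comp (measurable_pi_apply i))]
  refine Finset.prod_congr rfl fun i _ => ?_
  have h := (measurePreserving_eval μ i).lintegral_comp (hf i)
  simpa using h

lemma pi_withDensity_aux {d : ℕ} (μ ν : Fin d → Measure ℝ) [∀ i, IsProbabilityMeasure (μ i)]
    [∀ i, IsProbabilityMeasure (ν i)]
    (f : Fin d → ℝ → ℝ≥0∞) (hf : ∀ i, Measurable (f i))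
    (h : ∀ i, ν i = (μ i).withDensity (f i)) :
    Measure.pi ν = (Measure.pi μ).withDensity (fun x => ∏ i, f i (x i)) := by
  refine Measure.pi_eq fun s hs => ?_
  rw [withDensity_apply _ (MeasurableSet.univ_pi hs),
    ← lintegral_indicator (MeasurableSet.univ_pi hs)]
  have h1 : ∀ x : Fin d → ℝ, (Set.univ.pi s).indicator (fun x => ∏ i, f i (x i)) x
      = ∏ i, (s i).indicator (f i) (x i) := by
    intro x
    by_cases hx : x ∈ Set.univ.pi s
    · rw [Set.indicator_of_mem hx]
      refine Finset.prod_congr rfl fun i _ => ?_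
      rw [Set.indicator_of_mem (hx i (Set.mem_univ i))]
    · rw [Set.indicator_of_notMem hx]
      simp only [Set.mem_univ_pi, not_forall] at hx
      obtain ⟨i, hi⟩ := hx
      exact (Finset.prod_eq_zero (Finset.mem_univ i) (Set.indicator_of_notMem hi _)).symm
  simp_rw [h1]
  rw [lintegral_pi_prod_aux μ _ (fun i => (hf i).indicator (hs i))]
  refine Finset.prod_congr rfl fun i _ => ?_
  rw [h i, withDensity_apply _ (hs i), lintegral_indicator (hs i)]

/-- one-dimensional likelihood ratio -/
def lrAux (n : ℕ) (a b : ℝ) (x : ℝ) : ℝ≥0∞ :=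
  ENNReal.ofReal (Real.exp (n * ((b - a) * x - (b ^ 2 - a ^ 2) / 2)))

lemma measurable_lrAux (n : ℕ) (a b : ℝ) : Measurable (lrAux n a b) := by
  unfold lrAux; fun_prop

lemma pdf_lrAux (n : ℕ) (hn : 0 < n) (a b x : ℝ) :
    gaussianPDF a (n : ℝ≥0)⁻¹ x * lrAux n a b x = gaussianPDF b (n : ℝ≥0)⁻¹ x := by
  have hn' : (n : ℝ) ≠ 0 := by positivity
  unfold lrAux gaussianPDF
  rw [← ENNReal.ofReal_mul (gaussianPDFReal_nonneg _ _ _)]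
  congr 1
  unfold gaussianPDFReal
  rw [mul_assoc, ← Real.exp_add]
  congr 2
  push_cast
  field_simp
  ring

lemma gaussian_lrAux (n : ℕ) (hn : 0 < n) (a b : ℝ) :
    gaussianReal b (n : ℝ≥0)⁻¹ = (gaussianReal a (n : ℝ≥0)⁻¹).withDensity (lrAux n a b) := by
  have hv : (n : ℝ≥0)⁻¹ ≠ 0 := by positivity
  rw [gaussianReal_of_var_ne_zero _ hv, gaussianReal_of_var_ne_zero _ hv,
    ← withDensity_mul _ (measurable_gaussianPDF _ _) (measurable_lrAux _ _ _)]
  congr 1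
  funext x
  exact (pdf_lrAux n hn a b x).symm

lemma lrAux_sq (n : ℕ) (a b x : ℝ) :
    lrAux n a b x ^ 2 = ENNReal.ofReal (Real.exp (n * (b - a) ^ 2)) * lrAux n a (2 * b - a) x := by
  unfold lrAux
  rw [← ENNReal.ofReal_pow (Real.exp_nonneg _), ← ENNReal.ofReal_mul (Real.exp_nonneg _),
    ← Real.exp_nat_mul, ← Real.exp_add]
  congr 2
  push_cast
  ring

lemma lintegral_lrAux_sq (n : ℕ) (hn : 0 < n) (a b : ℝ) :
    ∫⁻ x, lrAux n a b x ^ 2 ∂(gaussianReal a (n : ℝ≥0)⁻¹)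
      = ENNReal.ofReal (Real.exp (n * (b - a) ^ 2)) := by
  simp_rw [lrAux_sq]
  rw [lintegral_const_mul _ (measurable_lrAux _ _ _), ← setLIntegral_univ,
    ← withDensity_apply _ MeasurableSet.univ, ← gaussian_lrAux n hn, measure_univ, mul_one]

lemma lintegral_sq_rpow_aux {X : Type*} [MeasurableSpace X] (P : Measure X) (f g : X → ℝ≥0∞)
    (hf : Measurable f) (hg : Measurable g) :
    ∫⁻ x, f x * g x ∂P ≤ (∫⁻ x, f x ^ 2 ∂P) ^ (1 / 2 : ℝ) * (∫⁻ x, g x ^ 2 ∂P) ^ (1 / 2 : ℝ) := by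
  have h := ENNReal.lintegral_mul_le_Lp_mul_Lq P Real.HolderConjugate.two_two
    hf.aemeasurable hg.aemeasurable
  simpa using h

lemma main_aux (d n : ℕ) (hn : 0 < n) (a b : Fin d → ℝ) (α β Δ v1 v2 : ℝ) (hβ : 0 ≤ β)
    (hα : ∑ i, (b i - a i) ^ 2 = α ^ 2) (hΔ : Δ ≤ |v1 - v2|)
    (Q : (Fin d → ℝ) → ℝ) (hQ : Measurable Q)
    (hrisk : ∫⁻ x, ENNReal.ofReal ((Q x - v1) ^ 2) ∂(gaussPi d n a) ≤ ENNReal.ofReal (β ^ 2)) :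
    ENNReal.ofReal ((max (Δ - β * Real.exp (n * α ^ 2 / 2)) 0) ^ 2) ≤
      ∫⁻ x, ENNReal.ofReal ((Q x - v2) ^ 2) ∂(gaussPi d n b) := by
  set L : (Fin d → ℝ) → ℝ≥0∞ := fun x => ∏ i, lrAux n (a i) (b i) (x i) with hL
  have hLm : Measurable L := by
    refine Finset.measurable_prod _ fun i _ => ?_
    exact (measurable_lrAux n (a i) (b i)).comp (measurable_pi_apply i)
  have hdens : gaussPi d n b = (gaussPi d n a).withDensity L :=
    pi_withDensity_aux _ _ _ (fun i => measurable_lrAux n (a i) (b i))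
      (fun i => gaussian_lrAux n hn (a i) (b i))
  have hL2 : ∫⁻ x, L x ^ 2 ∂(gaussPi d n a) = ENNReal.ofReal (Real.exp (n * α ^ 2)) := by
    simp_rw [hL, ← Finset.prod_pow]
    unfold gaussPi
    rw [lintegral_pi_prod_aux _ (fun i y => lrAux n (a i) (b i) y ^ 2)
      (fun i => (measurable_lrAux n (a i) (b i)).pow_const 2)]
    simp_rw [lintegral_lrAux_sq n hn]
    rw [← ENNReal.ofReal_prod_of_nonneg (fun i _ => Real.exp_nonneg _), ← Real.exp_sum,
      ← Finset.mul_sum, hα]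
  have : IsProbabilityMeasure (gaussPi d n b) := by unfold gaussPi; infer_instance
  have hsq : ∀ (v : ℝ) x, ENNReal.ofReal ((Q x - v) ^ 2) = ENNReal.ofReal |Q x - v| ^ 2 := by
    intro v x
    rw [← ENNReal.ofReal_pow (abs_nonneg _), sq_abs]
  have hm : ∀ v : ℝ, Measurable fun x => ENNReal.ofReal |Q x - v| := by
    intro v
    exact ((hQ.sub_const v).norm).ennreal_ofReal
  set R := ∫⁻ x, ENNReal.ofReal ((Q x - v2) ^ 2) ∂(gaussPi d n b) with hR
  have h2 : ∫⁻ x, ENNReal.ofReal |Q x - v2| ∂(gaussPi d n b) ≤ R ^ (1 / 2 : ℝ) := by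
    have h := lintegral_sq_rpow_aux (gaussPi d n b) (fun x => ENNReal.ofReal |Q x - v2|)
      (fun _ => 1) (hm v2) measurable_const
    simp_rw [hR, hsq]
    simpa using h
  have h1 : ∫⁻ x, ENNReal.ofReal |Q x - v1| ∂(gaussPi d n b)
      ≤ ENNReal.ofReal (β * Real.exp (n * α ^ 2 / 2)) := by
    rw [hdens, lintegral_withDensity_eq_lintegral_mul _ hLm (hm v1)]
    refine (lintegral_sq_rpow_aux (gaussPi d n a) _ _ hLm (hm v1)).trans ?_
    simp_rw [hsq] at hrisk
    rw [hL2, mul_comm, ENNReal.ofReal_mul hβ]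
    refine mul_le_mul' ((ENNReal.rpow_le_rpow hrisk (by norm_num)).trans_eq ?_) (le_of_eq ?_)
    · rw [ENNReal.ofReal_rpow_of_nonneg (sq_nonneg _) (by norm_num), ← Real.sqrt_eq_rpow,
        Real.sqrt_sq hβ]
    · rw [ENNReal.ofReal_rpow_of_nonneg (Real.exp_nonneg _) (by norm_num), ← Real.exp_mul]
      congr 2
      ring
  have h3 : ENNReal.ofReal Δ ≤ R ^ (1 / 2 : ℝ) + ENNReal.ofReal (β * Real.exp (n * α ^ 2 / 2)) := by
    calc ENNReal.ofReal Δ = ∫⁻ _, ENNReal.ofReal Δ ∂(gaussPi d n b) := by simp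
      _ ≤ ∫⁻ x, (ENNReal.ofReal |Q x - v2| + ENNReal.ofReal |Q x - v1|) ∂(gaussPi d n b) := by
        refine lintegral_mono fun x => ?_
        rw [← ENNReal.ofReal_add (abs_nonneg _) (abs_nonneg _)]
        refine ENNReal.ofReal_le_ofReal (hΔ.trans ?_)
        have := abs_sub (Q x - v2) (Q x - v1)
        have e : (Q x - v2) - (Q x - v1) = v1 - v2 := by ring
        rwa [e] at this
      _ = _ := lintegral_add_left (hm v2) _
      _ ≤ _ := add_le_add h2 h1
  have h4 : ENNReal.ofReal (Δ - β * Real.exp (n * α ^ 2 / 2)) ≤ R ^ (1 / 2 : ℝ) := by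
    rw [ENNReal.ofReal_sub _ (by positivity)]
    exact tsub_le_iff_right.2 h3
  have h5 := pow_le_pow_left' h4 2
  rw [← ENNReal.rpow_natCast (R ^ (1 / 2 : ℝ)), ← ENNReal.rpow_mul] at h5
  norm_num at h5
  rw [ENNReal.ofReal_pow (le_max_right _ _), ENNReal.ofReal_max]
  simpa using h5

/-- constrained risk inequality, after Brown–Low: with
`D₁ = N(θ, I/n)`, `D₂ = N((1 + α/‖θ‖₂)θ, I/n)`, `Q(N(μ, I/n)) = ‖μ‖₂²`, and `(P₁, P₂)` an
ordering of `(D₁, D₂)`: if `E_{P₁}(Q̂ - Q(P₁))² ≤ β²` then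
`E_{P₂}(Q̂ - Q(P₂))² ≥ [α² + 2α‖θ‖₂ - β exp(nα²/2)]₊²`. -/
theorem stmt14 (d n : ℕ) (hn : 0 < n) (θ : Fin d → ℝ) (hθ : θ ≠ 0)
    (α β : ℝ) (hα : 0 ≤ α) (hβ : 0 ≤ β)
    (Qhat : (Fin d → ℝ) → ℝ) (hQhat : Measurable Qhat)
    (P1 P2 : Measure (Fin d → ℝ)) (v1 v2 : ℝ)
    (hcases :
      (P1 = gaussPi d n θ ∧ v1 = ∑ i, θ i ^ 2 ∧
        P2 = gaussPi d n (fun i => (1 + α / Real.sqrt (∑ i, θ i ^ 2)) * θ i) ∧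
        v2 = (1 + α / Real.sqrt (∑ i, θ i ^ 2)) ^ 2 * ∑ i, θ i ^ 2) ∨
      (P1 = gaussPi d n (fun i => (1 + α / Real.sqrt (∑ i, θ i ^ 2)) * θ i) ∧
        v1 = (1 + α / Real.sqrt (∑ i, θ i ^ 2)) ^ 2 * ∑ i, θ i ^ 2 ∧
        P2 = gaussPi d n θ ∧ v2 = ∑ i, θ i ^ 2))
    (hrisk : ∫⁻ x, ENNReal.ofReal ((Qhat x - v1) ^ 2) ∂P1 ≤ ENNReal.ofReal (β ^ 2)) :
    ENNReal.ofReal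
        ((max (α ^ 2 + 2 * α * Real.sqrt (∑ i, θ i ^ 2) -
            β * Real.exp (n * α ^ 2 / 2)) 0) ^ 2) ≤
      ∫⁻ x, ENNReal.ofReal ((Qhat x - v2) ^ 2) ∂P2 := by
  have hS : 0 < ∑ i, θ i ^ 2 := by
    obtain ⟨i, hi⟩ := Function.ne_iff.1 hθ
    refine Finset.sum_pos' (fun i _ => sq_nonneg _) ⟨i, Finset.mem_univ i, ?_⟩
    have : θ i ≠ 0 := hi
    positivity
  set S := ∑ i, θ i ^ 2 with hSdef
  have hr : 0 < Real.sqrt S := Real.sqrt_pos.2 hS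
  have hrs : Real.sqrt S ^ 2 = S := Real.sq_sqrt hS.le
  have hdiff : (1 + α / Real.sqrt S) ^ 2 * S - S = α ^ 2 + 2 * α * Real.sqrt S := by
    have h1 : (1 + α / Real.sqrt S) ^ 2 * S = (Real.sqrt S + α) ^ 2 := by
      nth_rewrite 2 [← hrs]
      field_simp
    rw [h1]
    linear_combination hrs
  have hsum : ∑ i, ((1 + α / Real.sqrt S) * θ i - θ i) ^ 2 = α ^ 2 := by
    have h1 : ∀ i, ((1 + α / Real.sqrt S) * θ i - θ i) ^ 2 = (α / Real.sqrt S) ^ 2 * θ i ^ 2 :=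
      fun i => by ring
    simp_rw [h1]
    rw [← Finset.mul_sum, ← hSdef, div_pow, hrs]
    field_simp
  rcases hcases with ⟨rfl, rfl, rfl, rfl⟩ | ⟨rfl, rfl, rfl, rfl⟩
  · refine main_aux d n hn _ _ α β _ _ _ hβ hsum ?_ Qhat hQhat hrisk
    rw [← hdiff, abs_sub_comm]
    exact le_abs_self _
  · refine main_aux d n hn _ _ α β _ _ _ hβ ?_ ?_ Qhat hQhat hrisk
    · rw [← hsum]
      exact Finset.sum_congr rfl fun i _ => by ring
    · rw [← hdiff]
      exact le_abs_self _
end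
end
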